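/- Let n ≥ 3, let F_n be the free group on free generators x_1, …, x_n, and let w be a nontrivial element of the subgroup of F_n generated by x₁ and x₂. Consider the following 2n−4 automorphisms of F_n: for each k with 3 ≤ k ≤ n, the automorphism R_k sending x_k to x_k·w and fixing every other generator, and the automorphism L_k sending x_k to w⁻¹·x_k and fixing every other generator. Then these 2n−4 automorphisms pairwise commute, and the group homomorphism from ℤ^{2n−4} to Aut(F_n) sending the standard basis vectors to the R_k and L_k (3 ≤ k ≤ n) is injective; in other words, they are a basis of a free abelian subgroup of Aut(F_n) of rank 2n−4. -/

import Mathlib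

/-!
Every automorphism in the group generated by the `R_k` and `L_k` fixes `w` and has the form
`x_i ↦ w ^ (-b i) * x_i * w ^ (a i)` for exponent vectors `a, b`. Such exponents add up under
composition (`IsTwist.mul`), so two automorphisms of this form commute, and the product
`∏ g_j ^ c_j` has as exponents at `x_k` exactly the coefficients of `R_k` and `L_k`
(`twist_list`). Injectivity thus reduces to the statement that `x_k = w ^ s * x_k * w ^ t` forces
`s = t = 0` (`exponents_zero`). Killing `x_k` gives `w ^ (s + t) = 1`, so `t = -s` and `x_k`
commutes with `u = w ^ s`. Finally, no nontrivial `u ∈ ⟨x_1, x_2⟩` commutes with `x_k`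
(`eq_one_of_commute`): let `x_1, x_2` act on `F_n` by left translation, and `x_k` by the
transposition `(1 u)`; conjugation by `u` turns it into `(u u²)`, and `u² ≠ 1`.
-/

/-- `φ` fixes `w` and sends each free generator `x_i` to `w ^ (-b i) * x_i * w ^ (a i)`. -/
structure IsTwist {n : ℕ} (w : FreeGroup (Fin n)) (φ : MulAut (FreeGroup (Fin n)))
    (a b : Fin n → ℤ) : Prop where
  fix : φ w = w
  apply_of : ∀ i, φ (FreeGroup.of i) = w ^ (-b i) * FreeGroup.of i * w ^ (a i)

namespace IsTwist

variable {n : ℕ} {w : FreeGroup (Fin n)} {φ ψ : MulAut (FreeGroup (Fin n))}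
  {a b a' b' : Fin n → ℤ}

theorem one : IsTwist w 1 0 0 := ⟨rfl, by simp⟩

theorem mul (h : IsTwist w φ a b) (h' : IsTwist w ψ a' b') :
    IsTwist w (φ * ψ) (a + a') (b + b') := by
  refine ⟨by simp [MulAut.mul_apply, h'.fix, h.fix], fun i => ?_⟩
  rw [MulAut.mul_apply, h'.apply_of]
  simp only [map_mul, map_zpow, h.fix, h.apply_of, Pi.add_apply]
  group

theorem inv (h : IsTwist w φ a b) : IsTwist w φ⁻¹ (-a) (-b) := by
  have hf : φ⁻¹ w = w := by
    conv_lhs => rw [← h.fix]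
    simp
  refine ⟨hf, fun i => ?_⟩
  apply φ.injective
  simp only [MulAut.apply_inv_self, map_mul, map_zpow, h.fix, h.apply_of, Pi.neg_apply]
  group

theorem pow (h : IsTwist w φ a b) (k : ℕ) : IsTwist w (φ ^ k) (k • a) (k • b) := by
  induction k with
  | zero => simpa using one
  | succ k ih => simpa only [pow_succ, succ_nsmul] using ih.mul h

theorem zpow (h : IsTwist w φ a b) (k : ℤ) : IsTwist w (φ ^ k) (k • a) (k • b) := by
  cases k with
  | ofNat k => simpa using h.pow k
  | negSucc k => simpa only [zpow_negSucc, negSucc_zsmul] using (h.pow (k + 1)).inv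

/-- A twist is determined by its exponents. -/
theorem ext_exponents (h : IsTwist w φ a b) (h' : IsTwist w ψ a b) : φ = ψ := by
  have key : φ.toMonoidHom = ψ.toMonoidHom :=
    FreeGroup.ext_hom _ _ fun i => (h.apply_of i).trans (h'.apply_of i).symm
  exact MulEquiv.toMonoidHom_injective key

theorem commute (h : IsTwist w φ a b) (h' : IsTwist w ψ a' b') : Commute φ ψ := by
  refine (h.mul h').ext_exponents ?_
  rw [add_comm a, add_comm b]
  exact h'.mul h

end IsTwist

/-- The exponents of `∏ g_j ^ c_j` are the corresponding linear combinations of the exponents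
of the factors. -/
theorem twist_list {n N : ℕ} {w : FreeGroup (Fin n)} {g : Fin N → MulAut (FreeGroup (Fin n))}
    {A B : Fin N → Fin n → ℤ} (h : ∀ j, IsTwist w (g j) (A j) (B j)) (c : Fin N → ℤ) :
    IsTwist w (List.ofFn fun j => g j ^ c j).prod (∑ j, c j • A j) (∑ j, c j • B j) := by
  have key : ∀ l : List (Fin N), IsTwist w (l.map fun j => g j ^ c j).prod
      (l.map fun j => c j • A j).sum (l.map fun j => c j • B j).sum := by
    intro l
    induction l with
    | nil => simpa using IsTwist.one
    | cons j l ih => simpa only [List.map_cons, List.prod_cons, List.sum_cons]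
        using ((h j).zpow (c j)).mul ih
  have := key (List.finRange N)
  simpa only [← List.ofFn_eq_map, List.sum_ofFn] using this

/-- Two homomorphisms that agree on `x` and `y` agree on the subgroup these generate. -/
theorem hom_eq_of_mem_pair {G H : Type*} [Group G] [Group H] {x y w : G}
    (hw : w ∈ Subgroup.closure ({x, y} : Set G)) {f f' : G →* H}
    (hx : f x = f' x) (hy : f y = f' y) : f w = f' w := by
  refine MonoidHom.eqOn_closure (s := {x, y}) ?_ hw
  rintro z (rfl | rfl)
  exacts [hx, hy]

/-- An element of `⟨x_p, x_q⟩` commuting with another free generator `x_k` is trivial. -/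
theorem eq_one_of_commute {n : ℕ} {p q k : Fin n} (hp : p ≠ k) (hq : q ≠ k)
    {u : FreeGroup (Fin n)}
    (hu : u ∈ Subgroup.closure ({FreeGroup.of p, FreeGroup.of q} : Set (FreeGroup (Fin n))))
    (hc : Commute u (FreeGroup.of k)) : u = 1 := by
  classical
  by_contra h1
  -- The action of `F_n` on itself: left translation, except that `x_k` acts as `(1 u)`.
  let f : FreeGroup (Fin n) →* Equiv.Perm (FreeGroup (Fin n)) :=
    FreeGroup.lift fun i => if i = k then Equiv.swap 1 u
      else MulAction.toPermHom (FreeGroup (Fin n)) (FreeGroup (Fin n)) (FreeGroup.of i)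
  have hfu : f u = MulAction.toPermHom (FreeGroup (Fin n)) (FreeGroup (Fin n)) u :=
    hom_eq_of_mem_pair hu (by simp [f, hp]) (by simp [f, hq])
  have hfk : f (FreeGroup.of k) = Equiv.swap 1 u := by simp [f]
  have h2 : u * u ≠ 1 := by
    rw [← pow_two]
    exact fun h => h1 ((pow_eq_one_iff_left two_ne_zero).1 h)
  have hcomm := congrArg (fun e => e (1 : FreeGroup (Fin n))) (hc.map f).eq
  simp [hfu, hfk] at hcomm
  exact h2 hcomm

theorem exponents_zero {n : ℕ} {p q k : Fin n} (hp : p ≠ k) (hq : q ≠ k)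
    {w : FreeGroup (Fin n)} (hw1 : w ≠ 1)
    (hw : w ∈ Subgroup.closure ({FreeGroup.of p, FreeGroup.of q} : Set (FreeGroup (Fin n))))
    {s t : ℤ} (h : w ^ s * FreeGroup.of k * w ^ t = FreeGroup.of k) : s = 0 ∧ t = 0 := by
  classical
  -- The retraction killing `x_k` fixes `w`.
  let f : FreeGroup (Fin n) →* FreeGroup (Fin n) :=
    FreeGroup.lift fun i => if i = k then 1 else FreeGroup.of i
  have hfw : f w = w := hom_eq_of_mem_pair (f' := MonoidHom.id _) hw
    (by simp [f, hp]) (by simp [f, hq])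
  have hfk : f (FreeGroup.of k) = 1 := by simp [f]
  have hst : w ^ (s + t) = 1 := by
    have := congrArg f h
    simpa only [map_mul, map_zpow, hfw, hfk, mul_one, ← zpow_add] using this
  have h0 : ∀ m : ℤ, w ^ m = 1 → m = 0 := fun m hm =>
    (IsMulTorsionFree.zpow_eq_one_iff_right hw1).1 hm
  have ht : t = -s := by linarith [h0 _ hst]
  have hs : w ^ s = 1 := by
    refine eq_one_of_commute hp hq (Subgroup.zpow_mem _ hw s) ?_
    rw [ht, zpow_neg] at h
    exact mul_inv_eq_iff_eq_mul.1 h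
  have := h0 s hs
  exact ⟨this, by omega⟩

/-- Two descriptions of a twist have the same exponents at generators other than `x_p, x_q`. -/
theorem IsTwist.exponents_eq {n : ℕ} {p q k : Fin n} (hp : p ≠ k) (hq : q ≠ k)
    {w : FreeGroup (Fin n)} (hw1 : w ≠ 1)
    (hw : w ∈ Subgroup.closure ({FreeGroup.of p, FreeGroup.of q} : Set (FreeGroup (Fin n))))
    {φ : MulAut (FreeGroup (Fin n))} {a b a' b' : Fin n → ℤ}
    (h : IsTwist w φ a b) (h' : IsTwist w φ a' b') : a k = a' k ∧ b k = b' k := by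
  have e := (h.apply_of k).symm.trans (h'.apply_of k)
  have e' : w ^ (b' k - b k) * FreeGroup.of k * w ^ (a k - a' k) = FreeGroup.of k := by
    calc w ^ (b' k - b k) * FreeGroup.of k * w ^ (a k - a' k)
        = w ^ b' k * (w ^ (-b k) * FreeGroup.of k * w ^ a k) * w ^ (-a' k) := by group
      _ = FreeGroup.of k := by rw [e]; group
  obtain ⟨h1, h2⟩ := exponents_zero hp hq hw1 hw e'
  omega

/-- Let `n ≥ 3` and let `w ≠ 1` lie in the subgroup of `F_n` generated by `x₁, x₂`.
The `2n-4` automorphisms `R_k : x_k ↦ x_k w` and `L_k : x_k ↦ w⁻¹ x_k` (for `3 ≤ k ≤ n`)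
pairwise commute, and the homomorphism `ℤ^{2n-4} → Aut(F_n)` sending the standard basis
vectors to them is injective; i.e. they are a basis of a free abelian subgroup of
`Aut(F_n)` of rank `2n-4`. Here `g (2m) = R_{m+3}` and `g (2m+1) = L_{m+3}` for
`0 ≤ m < n-2`, and the generators are indexed by `Fin n` (so `x_k` is `FreeGroup.of ⟨k-1, _⟩`). -/
theorem typeC_basis_aut_free_abelian (n : ℕ) (hn : 3 ≤ n)
    (w : FreeGroup (Fin n)) (hw1 : w ≠ 1)
    (hw : w ∈ Subgroup.closure
      ({FreeGroup.of ⟨0, by omega⟩, FreeGroup.of ⟨1, by omega⟩} : Set (FreeGroup (Fin n))))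
    (g : Fin (2 * n - 4) → MulAut (FreeGroup (Fin n)))
    (hR : ∀ m : ℕ, ∀ _ : m < n - 2,
      g ⟨2 * m, by omega⟩ (FreeGroup.of ⟨m + 2, by omega⟩) =
        FreeGroup.of ⟨m + 2, by omega⟩ * w)
    (hR' : ∀ m : ℕ, ∀ _ : m < n - 2, ∀ i : Fin n, i ≠ ⟨m + 2, by omega⟩ →
      g ⟨2 * m, by omega⟩ (FreeGroup.of i) = FreeGroup.of i)
    (hL : ∀ m : ℕ, ∀ _ : m < n - 2,
      g ⟨2 * m + 1, by omega⟩ (FreeGroup.of ⟨m + 2, by omega⟩) =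
        w⁻¹ * FreeGroup.of ⟨m + 2, by omega⟩)
    (hL' : ∀ m : ℕ, ∀ _ : m < n - 2, ∀ i : Fin n, i ≠ ⟨m + 2, by omega⟩ →
      g ⟨2 * m + 1, by omega⟩ (FreeGroup.of i) = FreeGroup.of i) :
    (∀ j k, Commute (g j) (g k)) ∧
      Function.Injective (fun c : Fin (2 * n - 4) → ℤ =>
        (List.ofFn fun j => g j ^ c j).prod) := by
  -- Exponent vectors: `g (2m)` and `g (2m+1)` both move only the generator of index `m + 2`,
  -- and `g j` multiplies on the right for `j` even, on the left for `j` odd.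
  let A : Fin (2 * n - 4) → Fin n → ℤ := fun j i => if (j : ℕ) + 4 = 2 * i then 1 else 0
  let B : Fin (2 * n - 4) → Fin n → ℤ := fun j i => if (j : ℕ) + 3 = 2 * i then 1 else 0
  have fix_w : ∀ φ : MulAut (FreeGroup (Fin n)),
      φ (FreeGroup.of ⟨0, by omega⟩) = FreeGroup.of ⟨0, by omega⟩ →
      φ (FreeGroup.of ⟨1, by omega⟩) = FreeGroup.of ⟨1, by omega⟩ → φ w = w :=
    fun φ h0 h1 => hom_eq_of_mem_pair (f := φ.toMonoidHom) (f' := MonoidHom.id _) hw h0 h1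
  have hT : ∀ j, IsTwist w (g j) (A j) (B j) := by
    rintro ⟨j, hj⟩
    obtain ⟨m, rfl | rfl⟩ : ∃ m, j = 2 * m ∨ j = 2 * m + 1 := ⟨j / 2, by omega⟩
    · have hm : m < n - 2 := by omega
      refine ⟨fix_w _ (hR' m hm _ (by simp)) (hR' m hm _ (by simp)), fun i => ?_⟩
      have hB : B ⟨2 * m, hj⟩ i = 0 := if_neg (by dsimp only; omega)
      by_cases hi : i = ⟨m + 2, by omega⟩
      · have hA : A ⟨2 * m, hj⟩ i = 1 := if_pos (by rw [Fin.ext_iff] at hi; dsimp only at hi ⊢; omega)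
        rw [hA, hB, hi, hR m hm]
        simp
      · have hA : A ⟨2 * m, hj⟩ i = 0 :=
          if_neg (by rw [Fin.ext_iff] at hi; dsimp only at hi ⊢; omega)
        rw [hA, hB, hR' m hm i hi]
        simp
    · have hm : m < n - 2 := by omega
      refine ⟨fix_w _ (hL' m hm _ (by simp)) (hL' m hm _ (by simp)), fun i => ?_⟩
      have hA : A ⟨2 * m + 1, hj⟩ i = 0 := if_neg (by dsimp only; omega)
      by_cases hi : i = ⟨m + 2, by omega⟩
      · have hB : B ⟨2 * m + 1, hj⟩ i = 1 := if_pos (by rw [Fin.ext_iff] at hi; dsimp only at hi ⊢; omega)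
        rw [hA, hB, hi, hL m hm]
        simp
      · have hB : B ⟨2 * m + 1, hj⟩ i = 0 :=
          if_neg (by rw [Fin.ext_iff] at hi; dsimp only at hi ⊢; omega)
        rw [hA, hB, hL' m hm i hi]
        simp
  refine ⟨fun j k => (hT j).commute (hT k), fun c c' hcc => ?_⟩
  have h := twist_list hT c
  have h' := twist_list hT c'
  dsimp only at hcc
  rw [← hcc] at h'
  have sumA : ∀ (d : Fin (2 * n - 4) → ℤ) (j : Fin (2 * n - 4)) (i : Fin n),
      (j : ℕ) + 4 = 2 * i → (∑ j, d j • A j) i = d j := by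
    intro d j i hji
    rw [Finset.sum_apply, Finset.sum_eq_single j]
    · simp [A, hji]
    · intro l _ hl
      have : ¬ (l : ℕ) + 4 = 2 * i := fun e => hl (Fin.ext (by omega))
      simp [A, this]
    · simp
  have sumB : ∀ (d : Fin (2 * n - 4) → ℤ) (j : Fin (2 * n - 4)) (i : Fin n),
      (j : ℕ) + 3 = 2 * i → (∑ j, d j • B j) i = d j := by
    intro d j i hji
    rw [Finset.sum_apply, Finset.sum_eq_single j]
    · simp [B, hji]
    · intro l _ hl
      have : ¬ (l : ℕ) + 3 = 2 * i := fun e => hl (Fin.ext (by omega))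
      simp [B, this]
    · simp
  funext j
  have hj := j.isLt
  obtain ⟨hA, hB⟩ := IsTwist.exponents_eq (k := ⟨(j : ℕ) / 2 + 2, by omega⟩)
    (by simp) (by simp) hw1 hw h h'
  rcases Nat.even_or_odd' (j : ℕ) with ⟨m, hm | hm⟩
  · rwa [sumA c j _ (by dsimp only; omega), sumA c' j _ (by dsimp only; omega)] at hA
  · rwa [sumB c j _ (by dsimp only; omega), sumB c' j _ (by dsimp only; omega)] at hB
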